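/- Let G be a finite simple graph on vertex set Fin n, let V = V₁ ∪ V₂ be a partition of the vertex set into two disjoint sets, and let F be a field. Then minrank_F(G) ≤ minrank_F(G[V₁]) + minrank_F(G[V₂]), where G[Vᵢ] denotes the subgraph of G induced by Vᵢ. -/

import Mathlib

/-- `A` represents `G` over `F` if all diagonal entries of `A` are nonzero and `A i j = 0`
for all distinct non-adjacent vertices `i`, `j`. The minrank of `G` over `F` is the minimum
rank of a matrix representing `G` over `F`. -/
noncomputable def minrank (F : Type*) [Field F] {V : Type*} [Fintype V] [DecidableEq V]
    (G : SimpleGraph V) : ℕ :=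
  sInf {r | ∃ A : Matrix V V F, (∀ i, A i i ≠ 0) ∧
    (∀ i j, i ≠ j → ¬ G.Adj i j → A i j = 0) ∧ A.rank = r}

/-!
If `H →g G` is surjective on vertices, then restricting a matrix representing `H` to the image of
a section of the homomorphism gives a matrix representing `G` of no larger rank. When `V₁` and `V₂`
cover the vertices, `G` is such an image of the disjoint sum `G[V₁] ⊕g G[V₂]`, which is represented
by block-diagonal matrices.
-/

open Matrix SimpleGraph

section Rank

theorem finrank_submodule_prod {R M N : Type*} [Semiring R] [StrongRankCondition R]
    [AddCommMonoid M] [AddCommMonoid N] [Module R M] [Module R N]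
    (p : Submodule R M) (q : Submodule R N) [Module.Free R p] [Module.Finite R p]
    [Module.Free R q] [Module.Finite R q] :
    Module.finrank R (p.prod q) = Module.finrank R p + Module.finrank R q := by
  have hinj : Function.Injective (p.subtype.prodMap q.subtype) :=
    p.subtype_injective.prodMap q.subtype_injective
  rw [← Module.finrank_prod, ← LinearMap.finrank_range_of_inj hinj, LinearMap.range_prodMap,
    p.range_subtype, q.range_subtype]

variable {R l m n o : Type*} [Fintype n] [Fintype o]

theorem mulVecLin_fromBlocks_zero_zero [CommSemiring R] (A : Matrix l n R) (B : Matrix m o R) :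
    (fromBlocks A 0 0 B).mulVecLin =
      (LinearEquiv.sumArrowLequivProdArrow l m R R).symm.toLinearMap ∘ₗ
        A.mulVecLin.prodMap B.mulVecLin ∘ₗ
          (LinearEquiv.sumArrowLequivProdArrow n o R R).toLinearMap := by
  refine LinearMap.ext fun x ↦ ?_
  have hblocks : fromBlocks A 0 0 B *ᵥ x = Sum.elim (A *ᵥ (x ∘ Sum.inl)) (B *ᵥ (x ∘ Sum.inr)) := by
    simp only [fromBlocks_mulVec, zero_mulVec, add_zero, zero_add]
  exact hblocks

theorem rank_fromBlocks_zero_zero [Field R] (A : Matrix l n R) (B : Matrix m o R) :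
    (fromBlocks A 0 0 B).rank = A.rank + B.rank := by
  rw [rank, mulVecLin_fromBlocks_zero_zero, LinearMap.range_comp, LinearEquiv.range_comp,
    LinearEquiv.finrank_map_eq, LinearMap.range_prodMap, finrank_submodule_prod, rank, rank]

end Rank

/-- A matrix `A` represents a graph `G` when its diagonal has no zero entry and its off-diagonal
support lies in the edges of `G`; these are the matrices over which `minrank` minimizes the rank.
Symmetry is not required. -/
structure RepresentsGraph {R V : Type*} [Zero R] (A : Matrix V V R) (G : SimpleGraph V) :
    Prop where
  diag_ne_zero (i : V) : A i i ≠ 0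
  eq_zero_of_not_adj (i j : V) (hne : i ≠ j) (hadj : ¬ G.Adj i j) : A i j = 0

namespace RepresentsGraph

variable {R V W : Type*} {G : SimpleGraph V} {H : SimpleGraph W}

protected theorem one [Zero R] [One R] [NeZero (1 : R)] [DecidableEq V] (G : SimpleGraph V) :
    RepresentsGraph (1 : Matrix V V R) G where
  diag_ne_zero i := by simp
  eq_zero_of_not_adj _ _ hne _ := one_apply_ne hne

variable [Zero R] {A : Matrix V V R} {B : Matrix W W R}

theorem submatrix (hB : RepresentsGraph B H) (f : Gᶜ →g Hᶜ) :
    RepresentsGraph (B.submatrix f f) G where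
  diag_ne_zero i := hB.diag_ne_zero (f i)
  eq_zero_of_not_adj i j hne hadj := by
    have hf : Hᶜ.Adj (f i) (f j) := f.map_adj ((compl_adj G i j).2 ⟨hne, hadj⟩)
    exact hB.eq_zero_of_not_adj _ _ hf.1 hf.2

theorem fromBlocks (hA : RepresentsGraph A G) (hB : RepresentsGraph B H) :
    RepresentsGraph (fromBlocks A 0 0 B) (G ⊕g H) where
  diag_ne_zero
    | .inl i => hA.diag_ne_zero i
    | .inr i => hB.diag_ne_zero i
  eq_zero_of_not_adj
    | .inl i, .inl j, hne, hadj => hA.eq_zero_of_not_adj i j (ne_of_apply_ne _ hne) hadj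
    | .inr i, .inr j, hne, hadj => hB.eq_zero_of_not_adj i j (ne_of_apply_ne _ hne) hadj
    | .inl _, .inr _, _, _ | .inr _, .inl _, _, _ => rfl

end RepresentsGraph

section Minrank

variable {F V W : Type*} [Field F] [Fintype V] [DecidableEq V] [Fintype W] [DecidableEq W]
  {G : SimpleGraph V} {H : SimpleGraph W}

theorem minrank_eq_sInf_rank_representsGraph (G : SimpleGraph V) :
    minrank F G = sInf {r | ∃ A : Matrix V V F, RepresentsGraph A G ∧ A.rank = r} := by
  refine congrArg sInf (Set.ext fun r ↦ exists_congr fun A ↦ ?_)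
  exact ⟨fun ⟨hdiag, hzero, hrank⟩ ↦ ⟨⟨hdiag, hzero⟩, hrank⟩,
    fun ⟨⟨hdiag, hzero⟩, hrank⟩ ↦ ⟨hdiag, hzero, hrank⟩⟩

theorem RepresentsGraph.minrank_le_rank {A : Matrix V V F} (hA : RepresentsGraph A G) :
    minrank F G ≤ A.rank := by
  rw [minrank_eq_sInf_rank_representsGraph]
  exact Nat.sInf_le ⟨A, hA, rfl⟩

variable (F)

theorem exists_representsGraph_rank_eq_minrank (G : SimpleGraph V) :
    ∃ A : Matrix V V F, RepresentsGraph A G ∧ A.rank = minrank F G := by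
  rw [minrank_eq_sInf_rank_representsGraph]
  exact Nat.sInf_mem (s := {r | ∃ A : Matrix V V F, RepresentsGraph A G ∧ A.rank = r})
    ⟨_, 1, .one G, rfl⟩

theorem minrank_le_of_compl_hom (f : Gᶜ →g Hᶜ) : minrank F G ≤ minrank F H := by
  obtain ⟨B, hB, hrank⟩ := exists_representsGraph_rank_eq_minrank F H
  calc
    minrank F G ≤ (B.submatrix f f).rank := (hB.submatrix f).minrank_le_rank
    _ ≤ B.rank := rank_submatrix_le B f f
    _ = minrank F H := hrank

theorem minrank_le_of_surjective_hom (f : H →g G) (hf : Function.Surjective f) :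
    minrank F G ≤ minrank F H := by
  obtain ⟨g, hg⟩ := hf.hasRightInverse
  refine minrank_le_of_compl_hom F ⟨g, fun {i j} hij ↦ ⟨hg.injective.ne hij.ne, fun hadj ↦ ?_⟩⟩
  exact hij.2 (by simpa only [hg i, hg j] using f.map_adj hadj)

theorem minrank_sum_le (G : SimpleGraph V) (H : SimpleGraph W) :
    minrank F (G ⊕g H) ≤ minrank F G + minrank F H := by
  obtain ⟨A, hA, hrankA⟩ := exists_representsGraph_rank_eq_minrank F G
  obtain ⟨B, hB, hrankB⟩ := exists_representsGraph_rank_eq_minrank F H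
  calc
    minrank F (G ⊕g H) ≤ (fromBlocks A 0 0 B).rank := (hA.fromBlocks hB).minrank_le_rank
    _ = A.rank + B.rank := rank_fromBlocks_zero_zero A B
    _ = minrank F G + minrank F H := by rw [hrankA, hrankB]

end Minrank

section InduceSum

variable {V : Type*}

/-- The canonical homomorphism to `G` from the disjoint sum of two of its induced subgraphs, given
by the inclusions of the two vertex sets. The sets may overlap, so it need not be injective. -/
def induceSumHom (G : SimpleGraph V) (s t : Set V) : G.induce s ⊕g G.induce t →g G where
  toFun := Sum.elim (↑) (↑)
  map_rel' {i j} hij := by cases i <;> cases j <;> simp_all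

theorem induceSumHom_surjective (G : SimpleGraph V) {s t : Set V} (hst : s ∪ t = Set.univ) :
    Function.Surjective (induceSumHom G s t) := by
  rw [← Set.range_eq_univ, ← hst]
  exact (Set.Sum.elim_range _ _).trans (by simp)

end InduceSum

theorem minrank_union_le_general (F : Type*) [Field F] {V : Type*} [Fintype V] [DecidableEq V]
    (G : SimpleGraph V) (s t : Set V) [Fintype s] [Fintype t] (hst : s ∪ t = Set.univ) :
    minrank F G ≤ minrank F (G.induce s) + minrank F (G.induce t) :=
  calc
    minrank F G ≤ minrank F (G.induce s ⊕g G.induce t) :=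
      minrank_le_of_surjective_hom F (induceSumHom G s t) (induceSumHom_surjective G hst)
    _ ≤ minrank F (G.induce s) + minrank F (G.induce t) := minrank_sum_le F _ _

/-- For a partition of the vertex set into `V₁` and `V₂`, the minrank of `G` over `F` is
at most the sum of the minranks of the induced subgraphs `G[V₁]` and `G[V₂]`. -/
theorem minrank_union_le (n : ℕ) (F : Type*) [Field F] (G : SimpleGraph (Fin n))
    (V₁ V₂ : Finset (Fin n)) (hunion : V₁ ∪ V₂ = Finset.univ) (hdisj : Disjoint V₁ V₂) :
    minrank F G ≤
      minrank F (G.induce (V₁ : Set (Fin n))) + minrank F (G.induce (V₂ : Set (Fin n))) :=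
  minrank_union_le_general F G V₁ V₂ (by rw [← Finset.coe_union, hunion, Finset.coe_univ])
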